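/- Let n be odd, 0 ≤ k ≤ n, and let σ : ℤ/nℤ → ℤ/nℤ be either a rotation x ↦ x+ℓ (in which case set ε = 1) or a reflection x ↦ j−x (in which case set ε = −1). Then the trace of the linear map induced by σ on the k-th exterior power Λ^k(ℂ^{ℤ/nℤ}) equals ε^{k(k−1)/2} multiplied by the number of k-element subsets A of ℤ/nℤ with σ(A) = A. -/

import Mathlib

open ExteriorAlgebra

/-- The algebra map `ExteriorAlgebra.map f` preserves the `k`-th exterior power. -/
theorem exteriorPower_map_le {R M : Type*} [CommRing R] [AddCommGroup M] [Module R M]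
    (k : ℕ) (f : M →ₗ[R] M) :
    Submodule.map (ExteriorAlgebra.map f).toLinearMap (⋀[R]^k M) ≤ ⋀[R]^k M := by
  have h2 : Submodule.map (ExteriorAlgebra.map f).toLinearMap
      (LinearMap.range (ι R (M := M))) ≤ LinearMap.range (ι R (M := M)) := by
    rw [ι_range_map_map]
    exact LinearMap.map_le_range
  show Submodule.map (ExteriorAlgebra.map f).toLinearMap
      (LinearMap.range (ι R (M := M)) ^ k) ≤ LinearMap.range (ι R (M := M)) ^ k
  rw [Submodule.map_pow]
  induction k with
  | zero => simp
  | succ m ih => rw [pow_succ, pow_succ]; exact mul_le_mul' ih h2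

/-- The linear map induced on the `k`-th exterior power `⋀[R]^k M` by a linear map
`f : M →ₗ[R] M`, obtained by restricting the algebra map `ExteriorAlgebra.map f`. -/
noncomputable def exteriorPowerMap {R M : Type*} [CommRing R] [AddCommGroup M] [Module R M]
    (k : ℕ) (f : M →ₗ[R] M) : ⋀[R]^k M →ₗ[R] ⋀[R]^k M :=
  (ExteriorAlgebra.map f).toLinearMap.restrict (p := ⋀[R]^k M) (q := ⋀[R]^k M)
    (fun x hx => exteriorPower_map_le k f ⟨x, hx, rfl⟩)

open Set.powersetCard in
theorem trace_aux {I : Type*} [LinearOrder I] [Fintype I] (k : ℕ) (σ : Equiv.Perm I) (c : ℂ)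
    (hc : ∀ (f : Fin k → I) (τ : Equiv.Perm (Fin k)), Function.Injective f →
      (∀ i, σ (f i) = f (τ i)) → ((Equiv.Perm.sign τ : ℤ) : ℂ) = c) :
    LinearMap.trace ℂ _
        (exteriorPowerMap k (LinearMap.funLeft ℂ ℂ σ.symm : (I → ℂ) →ₗ[ℂ] (I → ℂ)))
      = c * (Nat.card {A : Finset I // A.card = k ∧ ∀ x ∈ A, σ x ∈ A} : ℂ) := by
  classical
  have hmap : exteriorPowerMap k (LinearMap.funLeft ℂ ℂ σ.symm : (I → ℂ) →ₗ[ℂ] (I → ℂ))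
      = exteriorPower.map k (LinearMap.funLeft ℂ ℂ σ.symm) := by
    apply exteriorPower.linearMap_ext
    ext v
    simp only [LinearMap.compAlternatingMap_apply, exteriorPower.map_apply_ιMulti,
      exteriorPower.ιMulti_apply_coe]
    exact ExteriorAlgebra.map_apply_ιMulti _ _
  have hdiag : ∀ s : Set.powersetCard I k,
      exteriorPower.ιMultiDual ℂ k (Pi.basisFun ℂ I) s
        (exteriorPower.map k (LinearMap.funLeft ℂ ℂ σ.symm)
          (exteriorPower.ιMulti_family ℂ k (Pi.basisFun ℂ I) s)) =
      if ∀ x ∈ s.val, σ x ∈ s.val then c else 0 := by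
    intro s
    rw [exteriorPower.ιMulti_family, exteriorPower.map_apply_ιMulti,
      exteriorPower.ιMultiDual_apply_ιMulti]
    set f := ofFinEmbEquiv.symm s with hf
    have hmem : ∀ x, x ∈ s.val ↔ ∃ i, f i = x := fun x =>
      (mem_range_ofFinEmbEquiv_symm_iff_mem s x).symm
    have hent : (Matrix.of fun i j => (Pi.basisFun ℂ I).coord (f j)
        ((⇑(LinearMap.funLeft ℂ ℂ σ.symm) ∘ ⇑(Pi.basisFun ℂ I) ∘ f) i)) =
        Matrix.of fun i j => if σ (f i) = f j then (1 : ℂ) else 0 := by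
      ext i j
      simp [LinearMap.funLeft_apply, Pi.single_apply, Equiv.symm_apply_eq, eq_comm (a := f j)]
    rw [hent]
    split_ifs with h
    · have h1 : ∀ i, ∃ j, f j = σ (f i) := fun i =>
        (hmem _).1 (h _ ((hmem _).2 ⟨i, rfl⟩))
      choose t ht using h1
      have tinj : Function.Injective t := by
        intro a b hab
        apply f.injective
        apply σ.injective
        rw [← ht, ← ht, hab]
      let τ : Equiv.Perm (Fin k) := Equiv.ofBijective t (Finite.injective_iff_bijective.1 tinj)
      have hτ : ∀ i, σ (f i) = f (τ i) := fun i => (ht i).symm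
      rw [← hc f τ f.injective hτ, ← Matrix.det_permutation]
      congr 1
      ext i j
      simp [hτ, Equiv.toPEquiv, PEquiv.toMatrix_apply, eq_comm]
    · push Not at h
      obtain ⟨x, hx, hx'⟩ := h
      obtain ⟨i, rfl⟩ := (hmem x).1 hx
      apply Matrix.det_eq_zero_of_row_eq_zero i
      intro j
      simp only [Matrix.of_apply]
      rw [if_neg]
      intro h
      exact hx' ((hmem _).2 ⟨j, h.symm⟩)
  rw [hmap, LinearMap.trace_eq_matrix_trace ℂ ((Pi.basisFun ℂ I).exteriorPower k), Matrix.trace]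
  simp only [Matrix.diag_apply, LinearMap.toMatrix_apply, exteriorPower.basis_repr_apply,
    exteriorPower.basis_apply, hdiag]
  rw [← Finset.sum_filter, Finset.sum_const, nsmul_eq_mul, mul_comm]
  congr 2
  rw [← Fintype.card_subtype, ← Nat.card_eq_fintype_card]
  exact Nat.card_congr
    { toFun := fun A => ⟨A.1.1, A.1.2, A.2⟩
      invFun := fun A => ⟨⟨A.1, A.2.1⟩, A.2.2⟩
      left_inv := fun _ => rfl
      right_inv := fun _ => rfl }

theorem sign_invol_aux (k : ℕ) (τ : Equiv.Perm (Fin k)) (h2 : τ ^ 2 = 1)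
    (hfix : ∀ a b, τ a = a → τ b = b → a = b) :
    Equiv.Perm.sign τ = (-1) ^ (k * (k - 1) / 2) := by
  classical
  have hle : Fintype.card (Function.fixedPoints τ) ≤ 1 := by
    rw [Fintype.card_le_one_iff]
    rintro ⟨a, ha⟩ ⟨b, hb⟩
    exact Subtype.ext (hfix a b ha hb)
  have hpar : 2 ∣ τ.support.card := by
    rw [← Equiv.Perm.sum_cycleType, Equiv.Perm.cycleType_of_pow_prime_eq_one h2]
    simp
  have hcard := τ.card_fixedPoints
  have hsl := τ.sum_cycleType_le
  rw [Equiv.Perm.sum_cycleType] at hcard hsl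
  rw [Equiv.Perm.sign_of_pow_two_eq_one h2]
  simp only [Fintype.card_fin] at *
  set p := Fintype.card (Function.fixedPoints τ)
  obtain ⟨m, hm⟩ := hpar
  have hkm : k = 2 * m ∨ k = 2 * m + 1 := by omega
  have e1 : (k - p) / 2 = m := by omega
  rw [e1]
  have key : k * (k - 1) / 2 = m * (2 * (k - m - 1)) + m ∨ m = 0 ∧ k * (k - 1) / 2 = 0 := by
    rcases Nat.eq_zero_or_pos m with h0 | h0
    · right
      refine ⟨h0, ?_⟩
      subst h0
      rcases hkm with h | h <;> subst h <;> rfl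
    · left
      obtain ⟨r, rfl⟩ : ∃ r, m = r + 1 := ⟨m - 1, by omega⟩
      apply Nat.div_eq_of_eq_mul_left (by norm_num)
      rcases hkm with h | h
      · have a : k - 1 = 2 * r + 1 := by omega
        have b : k - (r + 1) - 1 = r := by omega
        rw [a, b, h]; ring
      · have a : k - 1 = 2 * r + 2 := by omega
        have b : k - (r + 1) - 1 = r + 1 := by omega
        rw [a, b, h]; ring
  rcases key with h | ⟨h, h'⟩
  · rw [h, pow_add, mul_left_comm, pow_mul]
    simp
  · rw [h', h]

/-- Dihedral sieving for exterior powers: for `n` odd, `0 ≤ k ≤ n`, and `σ` either a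
rotation `x ↦ x + ℓ` (with `ε = 1`) or a reflection `x ↦ j - x` (with `ε = -1`) of
`ℤ/nℤ`, the trace of the induced map on `⋀^k (ℂ^{ℤ/nℤ})` (where the permutation map on
`ℂ^{ℤ/nℤ}` sends `e_x` to `e_{σ x}`) equals `ε^{k(k-1)/2}` times the number of
`k`-subsets of `ℤ/nℤ` fixed by `σ`. -/
theorem trace_exteriorPower_dihedral (n k : ℕ) [NeZero n] (hn : Odd n) (hk : k ≤ n)
    (σ : Equiv.Perm (ZMod n)) (ε : ℂ)
    (hσ : ((∃ ℓ : ZMod n, σ = Equiv.addRight ℓ) ∧ ε = 1) ∨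
          ((∃ j : ZMod n, σ = Equiv.subLeft j) ∧ ε = -1)) :
    LinearMap.trace ℂ _
        (exteriorPowerMap k (LinearMap.funLeft ℂ ℂ σ.symm : (ZMod n → ℂ) →ₗ[ℂ] (ZMod n → ℂ)))
      = ε ^ (k * (k - 1) / 2) *
          (Nat.card {A : Finset (ZMod n) // A.card = k ∧ A.image σ = A} : ℂ) := by
  classical
  let _ : LinearOrder (ZMod n) := LinearOrder.lift' ZMod.val (ZMod.val_injective n)
  rw [trace_aux k σ (ε ^ (k * (k - 1) / 2))]
  · congr 2
    apply Nat.card_congr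
    apply Equiv.subtypeEquivRight
    intro A
    refine and_congr_right fun _ => ?_
    constructor
    · intro h
      apply Finset.eq_of_subset_of_card_le
      · intro y hy
        obtain ⟨x, hx, rfl⟩ := Finset.mem_image.1 hy
        exact h x hx
      · rw [Finset.card_image_of_injective _ σ.injective]
    · intro h x hx
      rw [← h]
      exact Finset.mem_image_of_mem _ hx
  · intro f τ hf hτ
    rcases hσ with ⟨⟨l, rfl⟩, rfl⟩ | ⟨⟨j, rfl⟩, rfl⟩
    · have hpow : ∀ m : ℕ, ∀ i, f ((τ ^ m) i) = f i + m * l := by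
        intro m
        induction m with
        | zero => simp
        | succ m ih =>
          intro i
          have h1 := hτ ((τ ^ m) i)
          rw [ih i] at h1
          rw [pow_succ', Equiv.Perm.mul_apply, ← h1]
          simp only [Equiv.coe_addRight]
          push_cast
          ring
      have hn1 : τ ^ n = 1 := by
        ext1 i
        apply hf
        rw [hpow]
        simp
      have hs : Equiv.Perm.sign τ ^ n = 1 := by rw [← map_pow, hn1, map_one]
      rcases Int.units_eq_one_or (Equiv.Perm.sign τ) with h | h
      · simp [h]
      · rw [h, hn.neg_one_pow] at hs
        exact absurd hs (by decide)
    · rw [sign_invol_aux k τ]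
      · simp
      · ext1 i
        apply hf
        rw [pow_two, Equiv.Perm.mul_apply, ← hτ, ← hτ]
        simp
      · intro a b ha hb
        apply hf
        have h1 := hτ a
        have h2 := hτ b
        rw [ha] at h1
        rw [hb] at h2
        simp only [Equiv.subLeft_apply] at h1 h2
        obtain ⟨m, hm⟩ := hn
        have h0 : ((2 * m + 1 : ℕ) : ZMod n) = 0 := by rw [← hm]; simp
        push_cast at h0
        have e : 2 * (f a - f b) = 0 := by linear_combination h2 - h1
        have : f a - f b = 0 := by linear_combination (f a - f b) * h0 - m * e
        exact sub_eq_zero.1 this
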